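/- (Lemma B.1.) For all real numbers ℓ, s, t, a with 0 < s < t < ℓ and a > 0, one has ∫₀^∞ (K₊(ℓ−t, b) / K₊(ℓ−s, a)) · p₀(t−s, a, b) db = 1. -/

import Mathlib

open MeasureTheory Set Real

/-- The first-passage kernel `K₊(t, x) = √(2/(πt³)) · x · exp(−x²/(2t))`. -/
noncomputable def Kplus (t x : ℝ) : ℝ :=
  Real.sqrt (2 / (Real.pi * t ^ 3)) * x * Real.exp (-x ^ 2 / (2 * t))

/-- The transition density of Brownian motion absorbed at `0`:
`p₀(t, x, y) = (2πt)^{−1/2}[exp(−(x−y)²/(2t)) − exp(−(x+y)²/(2t))]`. -/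
noncomputable def p0 (t x y : ℝ) : ℝ :=
  (Real.sqrt (2 * Real.pi * t))⁻¹ *
    (Real.exp (-(x - y) ^ 2 / (2 * t)) - Real.exp (-(x + y) ^ 2 / (2 * t)))

lemma aux_odd (c : ℝ) : ∫ x : ℝ, x * Real.exp (-c * x ^ 2) = 0 := by
  have h := integral_neg_eq_self (fun x : ℝ => x * Real.exp (-c * x ^ 2)) volume
  have h2 : ∫ x : ℝ, (-x) * Real.exp (-c * (-x) ^ 2) = - ∫ x : ℝ, x * Real.exp (-c * x ^ 2) := by
    rw [← integral_neg]
    congr 1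
    ext x
    simp
  rw [h2] at h
  linarith

lemma aux_gauss (c m : ℝ) (hc : 0 < c) :
    Integrable (fun b : ℝ => b * Real.exp (-c * (b - m) ^ 2)) ∧
    ∫ b : ℝ, b * Real.exp (-c * (b - m) ^ 2) = m * √(π / c) := by
  have i1 := integrable_mul_exp_neg_mul_sq hc
  have i2 := (integrable_exp_neg_mul_sq hc).const_mul m
  have e : (fun b : ℝ => b * Real.exp (-c * (b - m) ^ 2)) =
      fun b => (fun x : ℝ => x * Real.exp (-c * x ^ 2) + m * Real.exp (-c * x ^ 2)) (b - m) := by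
    ext b
    ring
  rw [e]
  refine ⟨(i1.add i2).comp_sub_right m, ?_⟩
  rw [integral_sub_right_eq_self (fun x : ℝ => x * Real.exp (-c * x ^ 2) + m * Real.exp (-c * x ^ 2)),
    integral_add i1 i2, aux_odd, integral_const_mul, integral_gaussian, zero_add]

lemma aux_const (u v a : ℝ) (hu : 0 < u) (hv : 0 < v) (ha : 0 < a) :
    √(2 / (π * u ^ 3)) * (√(2 * π * v))⁻¹ *
      (a * u / (u + v) * √(π / ((u + v) / (2 * u * v)))) = √(2 / (π * (u + v) ^ 3)) * a := by
  have hp := Real.pi_pos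
  have huv : 0 < u + v := by positivity
  rw [← sq_eq_sq₀ (by positivity) (by positivity)]
  simp only [mul_pow, inv_pow]
  rw [Real.sq_sqrt (by positivity), Real.sq_sqrt (by positivity), Real.sq_sqrt (by positivity),
    Real.sq_sqrt (by positivity)]
  field_simp

lemma aux_main (u v a : ℝ) (hu : 0 < u) (hv : 0 < v) (ha : 0 < a) :
    (∫ b in Set.Ioi (0:ℝ), Kplus u b / Kplus (u + v) a * p0 v a b) = 1 := by
  have huv : 0 < u + v := by positivity
  have hK : 0 < Kplus (u + v) a := by
    unfold Kplus
    have hp := Real.pi_pos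
    positivity
  set c := (u + v) / (2 * u * v) with hc
  set m := a * u / (u + v) with hm
  have hcpos : 0 < c := by positivity
  obtain ⟨hi, hI⟩ := aux_gauss c m hcpos
  set g : ℝ → ℝ := fun b => b * Real.exp (-c * (b - m) ^ 2) with hg
  set D := √(2 / (π * u ^ 3)) * (√(2 * π * v))⁻¹ * Real.exp (-a ^ 2 / (2 * (u + v))) /
    Kplus (u + v) a with hD
  have key : ∀ b, Kplus u b / Kplus (u + v) a * p0 v a b = D * (g b + g (-b)) := by
    intro b
    have e1 : Real.exp (-b ^ 2 / (2 * u)) * Real.exp (-(a - b) ^ 2 / (2 * v)) =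
        Real.exp (-a ^ 2 / (2 * (u + v))) * Real.exp (-c * (b - m) ^ 2) := by
      rw [← Real.exp_add, ← Real.exp_add, hc, hm]
      congr 1
      field_simp
      ring
    have e2 : Real.exp (-b ^ 2 / (2 * u)) * Real.exp (-(a + b) ^ 2 / (2 * v)) =
        Real.exp (-a ^ 2 / (2 * (u + v))) * Real.exp (-c * (-b - m) ^ 2) := by
      rw [← Real.exp_add, ← Real.exp_add, hc, hm]
      congr 1
      field_simp
      ring
    rw [hD, hg]
    simp only
    generalize Kplus (u + v) a = K
    unfold Kplus p0
    linear_combination (√(2 / (π * u ^ 3)) * (√(2 * π * v))⁻¹ * b / K) * (e1 - e2)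
  simp_rw [key]
  rw [integral_const_mul, integral_add hi.integrableOn hi.comp_neg.integrableOn,
    integral_comp_neg_Ioi, neg_zero, add_comm,
    intervalIntegral.integral_Iic_add_Ioi hi.integrableOn hi.integrableOn, hI, hD]
  have := aux_const u v a hu hv ha
  rw [← hc, ← hm] at this
  rw [div_mul_eq_mul_div, div_eq_one_iff_eq hK.ne']
  unfold Kplus
  linear_combination Real.exp (-a ^ 2 / (2 * (u + v))) * this

/-- Lemma B.1: for `0 < s < t < ℓ` and `a > 0`,
`∫₀^∞ (K₊(ℓ−t, b)/K₊(ℓ−s, a)) · p₀(t−s, a, b) db = 1`. -/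
theorem excursion_transition_density_integrates_to_one
    (ℓ s t a : ℝ) (hs : 0 < s) (hst : s < t) (htℓ : t < ℓ) (ha : 0 < a) :
    (∫ b in Set.Ioi (0:ℝ), Kplus (ℓ - t) b / Kplus (ℓ - s) a * p0 (t - s) a b) = 1 := by
  have h := aux_main (ℓ - t) (t - s) a (by linarith) (by linarith) ha
  rwa [show ℓ - t + (t - s) = ℓ - s by ring] at h
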